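/- arXiv:1707.09563 — 2 statements merged into one kernel-verified Lean document; each statement's English description precedes it below -/
import Mathlib

section
/- Assume the potential outcomes setup, suppose X is c-dependent with both Y_1 and Y_0 for c ∈ [0,1], suppose E(|Y| | X = x) < ∞ for x ∈ {0,1}, and suppose Y_1 and Y_0 are integrable. Then for each x ∈ {0,1}, E(Y_x) ∈ [ ∫_0^1 Q̲^c_x(τ) dτ, ∫_0^1 Q̄^c_x(τ) dτ ], and consequently E(Y_1 − Y_0) ∈ [ ∫_0^1 (Q̲^c_1(τ) − Q̄^c_0(τ)) dτ, ∫_0^1 (Q̄^c_1(τ) − Q̲^c_0(τ)) dτ ] (where these integrals may take values ±∞). -/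
open MeasureTheory Set ENNReal

noncomputable section

/-- `X` is `c`-dependent with the real random variable `V`. -/
def CDep {Ω : Type*} [MeasurableSpace Ω] (P : Measure Ω) (X : Ω → ℕ) (V : Ω → ℝ)
    (c : ℝ) : Prop :=
  ∃ g : ℝ → ℝ, Measurable g ∧ (∀ v, 0 ≤ g v ∧ g v ≤ 1) ∧
    (∀ A : Set ℝ, MeasurableSet A →
      (P ({ω | X ω = 1} ∩ V ⁻¹' A)).toReal = ∫ v in A, g v ∂(Measure.map V P)) ∧
    (∀ᵐ v ∂(Measure.map V P), |g v - (P {ω | X ω = 1}).toReal| ≤ c)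

/-- `P(X = x)`. -/
def px {Ω : Type*} [MeasurableSpace Ω] (P : Measure Ω) (X : Ω → ℕ) (x : ℕ) : ℝ :=
  (P {ω | X ω = x}).toReal

/-- The conditional cdf `y ↦ P(V ≤ y ∣ X = x)`. -/
def condCDF' {Ω : Type*} [MeasurableSpace Ω] (P : Measure Ω) (X : Ω → ℕ) (V : Ω → ℝ)
    (x : ℕ) (y : ℝ) : ℝ :=
  (P ({ω | V ω ≤ y} ∩ {ω | X ω = x})).toReal / (P {ω | X ω = x}).toReal

/-- The (extended-real-valued) quantile function of a cdf `G`, equal to the left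
inverse of `G` on `(0,1)` and extended by the support endpoints `lo` at `0` and
`hi` at `1`. -/
def Qgen (G : ℝ → ℝ) (lo hi : EReal) (τ : ℝ) : EReal :=
  if τ ≤ 0 then lo else if 1 ≤ τ then hi
  else ((sInf {y : ℝ | τ ≤ G y} : ℝ) : EReal)

/-- The clipped quantile level used in the upper quantile bound. -/
def qUp (p c τ : ℝ) : ℝ := min (min (τ + c / p * min τ (1 - τ)) (τ / p)) 1

/-- The clipped quantile level used in the lower quantile bound. -/
def qLo (p c τ : ℝ) : ℝ := max (max (τ - c / p * min τ (1 - τ)) ((τ - 1) / p + 1)) 0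

/-- The `τ`-th quantile of the random variable `V`. -/
def quant {Ω : Type*} [MeasurableSpace Ω] (P : Measure Ω) (V : Ω → ℝ) (τ : ℝ) : ℝ :=
  sInf {z : ℝ | τ ≤ (P {ω | V ω ≤ z}).toReal}

/-- The truncation of an extended real to `ℝ≥0∞`. -/
def toENN (a : EReal) : ℝ≥0∞ := if a = ⊤ then ⊤ else ENNReal.ofReal a.toReal

/-- The (possibly infinite) signed integral `∫_0^1 f(τ) dτ` of an
extended-real-valued function, as an extended real. -/
def eint01 (f : ℝ → EReal) : EReal :=
  ((∫⁻ τ in Set.Ioo (0:ℝ) 1, toENN (f τ) : ℝ≥0∞) : EReal) -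
    ((∫⁻ τ in Set.Ioo (0:ℝ) 1, toENN (-(f τ)) : ℝ≥0∞) : EReal)

/-!
Write `F` for the cdf of a potential outcome `V = Y_x` and `G` for its cdf given `X = x`.
Integrating `|g - p_1| ≤ c` over `{V ≤ y}` and over its complement gives
`|P(V ≤ y, X = x) - p_x F(y)| ≤ c min {F(y), 1 - F(y)}`, which together with the Fréchet bounds on
`P(V ≤ y, X = x)` says exactly that `G(y)` lies between `qLo p_x c (F y)` and `qUp p_x c (F y)`.
Both level functions are monotone, and the upper one is strictly so until it reaches `1`, so these
bounds can be inverted: the `τ`-quantile of `V` lies between the quantiles of `G` at the levels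
`qLo p_x c τ` and `qUp p_x c τ`, even where `F` or `G` has jumps or flat pieces. Since the quantile
function of `V` has under Lebesgue measure on `(0,1)` the law of `V`, integrating over `τ` gives the
bounds on `E(V)`.
-/

open ProbabilityTheory

section ExtendedIntegral

lemma toENN_mono : Monotone toENN := by
  intro a b hab
  unfold toENN
  by_cases hb : b = ⊤
  · simp [hb]
  have ha : a ≠ ⊤ := fun h => hb (top_le_iff.1 (h ▸ hab))
  rw [if_neg ha, if_neg hb]
  obtain rfl | ha' := eq_or_ne a ⊥
  · simp
  · exact ENNReal.ofReal_le_ofReal (EReal.toReal_le_toReal hab ha' hb)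

lemma toENN_coe (r : ℝ) : toENN (r : EReal) = ENNReal.ofReal r := by
  simp [toENN]

lemma eint01_mono {f g : ℝ → EReal} (h : ∀ τ ∈ Ioo (0 : ℝ) 1, f τ ≤ g τ) :
    eint01 f ≤ eint01 g := by
  refine EReal.sub_le_sub ?_ ?_ <;> rw [EReal.coe_ennreal_le_coe_ennreal_iff]
  · exact setLIntegral_mono' measurableSet_Ioo fun τ hτ => toENN_mono (h τ hτ)
  · exact setLIntegral_mono' measurableSet_Ioo fun τ hτ =>
      toENN_mono (EReal.neg_le_neg_iff.2 (h τ hτ))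

lemma eint01_coe {f : ℝ → ℝ} (hf : IntegrableOn f (Ioo 0 1)) :
    eint01 (fun τ => (f τ : EReal)) = ((∫ τ in Ioo (0 : ℝ) 1, f τ : ℝ) : EReal) := by
  have hneg : ∫⁻ τ in Ioo (0 : ℝ) 1, ENNReal.ofReal (-f τ) ≠ ⊤ := hf.neg.lintegral_lt_top.ne
  unfold eint01
  simp only [← EReal.coe_neg, toENN_coe]
  rw [integral_eq_lintegral_pos_part_sub_lintegral_neg_part hf, EReal.coe_sub,
    EReal.coe_ennreal_toReal hf.lintegral_lt_top.ne, EReal.coe_ennreal_toReal hneg]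

lemma integral_mem_Icc_eint01 {f : ℝ → ℝ} {l u : ℝ → EReal} (hf : IntegrableOn f (Ioo 0 1))
    (h : ∀ τ ∈ Ioo (0 : ℝ) 1, (f τ : EReal) ∈ Icc (l τ) (u τ)) :
    ((∫ τ in Ioo (0 : ℝ) 1, f τ : ℝ) : EReal) ∈ Icc (eint01 l) (eint01 u) := by
  rw [← eint01_coe hf]
  exact ⟨eint01_mono fun τ hτ => (h τ hτ).1, eint01_mono fun τ hτ => (h τ hτ).2⟩

end ExtendedIntegral

section QuantileOfCDF

variable {μ : Measure ℝ}

lemma sInf_setOf_le_cdf_le_iff {τ : ℝ} (hτ : τ ∈ Ioo 0 1) {y : ℝ} :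
    sInf {z | τ ≤ cdf μ z} ≤ y ↔ τ ≤ cdf μ y := by
  have hne : {z | τ ≤ cdf μ z}.Nonempty :=
    ((tendsto_cdf_atTop μ).eventually_const_le hτ.2).exists
  have hbdd : BddBelow {z | τ ≤ cdf μ z} := by
    obtain ⟨b, hb⟩ := ((tendsto_cdf_atBot μ).eventually_lt_const hτ.1).exists
    exact ⟨b, fun z hz => ((monotone_cdf μ).reflect_lt (hb.trans_le hz)).le⟩
  have hattained : τ ≤ cdf μ (sInf {z | τ ≤ cdf μ z}) := by
    refine ge_of_tendsto (((cdf μ).right_continuous _).mono_left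
      (nhdsWithin_mono _ Ioi_subset_Ici_self)) ?_
    filter_upwards [self_mem_nhdsWithin] with z hz
    obtain ⟨w, hw, hwz⟩ := exists_lt_of_csInf_lt hne hz
    exact hw.trans (monotone_cdf μ hwz.le)
  exact ⟨fun h => hattained.trans (monotone_cdf μ h), fun h => csInf_le hbdd h⟩

variable {lo hi : EReal} {u q : ℝ}

lemma Qgen_cdf_le (hu : u < 1) (hlo : lo ≤ q) (h : u ≤ cdf μ q) :
    Qgen (cdf μ) lo hi u ≤ q := by
  unfold Qgen
  split_ifs with hu0 hu1
  · exact hlo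
  · exact absurd hu hu1.not_gt
  · exact EReal.coe_le_coe_iff.2 ((sInf_setOf_le_cdf_le_iff ⟨not_le.1 hu0, hu⟩).2 h)

lemma le_Qgen_cdf (hu : 0 < u) (hhi : q ≤ hi) (h : u < 1 → ∀ y, u ≤ cdf μ y → q ≤ y) :
    q ≤ Qgen (cdf μ) lo hi u := by
  unfold Qgen
  split_ifs with hu0 hu1
  · exact absurd hu hu0.not_gt
  · exact hhi
  · have hu' : u < 1 := not_le.1 hu1
    exact EReal.coe_le_coe_iff.2
      (h hu' _ ((sInf_setOf_le_cdf_le_iff ⟨hu, hu'⟩).1 le_rfl))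

end QuantileOfCDF

section QuantileOfRandomVariable

variable {Ω : Type*} [MeasurableSpace Ω] {P : Measure Ω} [IsProbabilityMeasure P] {V : Ω → ℝ}

lemma cdf_map_eq_measureReal (hV : Measurable V) (y : ℝ) :
    cdf (P.map V) y = P.real {ω | V ω ≤ y} := by
  have := Measure.isProbabilityMeasure_map (μ := P) hV.aemeasurable
  rw [cdf_eq_real, map_measureReal_apply hV measurableSet_Iic]
  rfl

lemma quant_le_iff (hV : Measurable V) {τ : ℝ} (hτ : τ ∈ Ioo 0 1) {y : ℝ} :
    quant P V τ ≤ y ↔ τ ≤ cdf (P.map V) y := by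
  rw [← sInf_setOf_le_cdf_le_iff hτ]
  simp only [cdf_map_eq_measureReal hV, quant, measureReal_def]

lemma le_cdf_quant (hV : Measurable V) {τ : ℝ} (hτ : τ ∈ Ioo 0 1) :
    τ ≤ cdf (P.map V) (quant P V τ) :=
  (quant_le_iff hV hτ).1 le_rfl

lemma monotoneOn_quant (hV : Measurable V) : MonotoneOn (quant P V) (Ioo 0 1) :=
  fun _ ha _ hb hab => (quant_le_iff hV ha).2 (hab.trans (le_cdf_quant hV hb))

lemma identDistrib_quant (hV : Measurable V) :
    IdentDistrib (quant P V) V (volume.restrict (Ioo 0 1)) P := by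
  have hq : AEMeasurable (quant P V) (volume.restrict (Ioo 0 1)) :=
    aemeasurable_restrict_of_monotoneOn measurableSet_Ioo (monotoneOn_quant hV)
  have := Measure.isProbabilityMeasure_map (μ := P) hV.aemeasurable
  refine ⟨hq, hV.aemeasurable, Measure.ext_of_Iic _ _ fun y => ?_⟩
  have hpre : quant P V ⁻¹' Iic y ∩ Ioo 0 1 = Iic (cdf (P.map V) y) ∩ Ioo 0 1 := by
    ext τ
    exact and_congr_left fun hτ => quant_le_iff hV hτ
  calc (volume.restrict (Ioo 0 1)).map (quant P V) (Iic y)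
      = volume.restrict (Ioo 0 1) (Iic (cdf (P.map V) y)) := by
        rw [Measure.map_apply_of_aemeasurable hq measurableSet_Iic,
          Measure.restrict_apply' measurableSet_Ioo, hpre,
          Measure.restrict_apply' measurableSet_Ioo]
    _ = ENNReal.ofReal (cdf (P.map V) y) := by
        rw [restrict_Ioo_eq_restrict_Ioc, Measure.restrict_apply' measurableSet_Ioc,
          inter_comm, Ioc_inter_Iic, min_eq_right (cdf_le_one _ y), Real.volume_Ioc, sub_zero]
    _ = P.map V (Iic y) := ofReal_cdf _ y

lemma quant_mem_Icc {lo hi : EReal} (hV : Measurable V)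
    (hlo : ∀ y : ℝ, (y : EReal) < lo → cdf (P.map V) y = 0)
    (hhi : ∀ y : ℝ, hi ≤ y → cdf (P.map V) y = 1) {τ : ℝ} (hτ : τ ∈ Ioo 0 1) :
    (quant P V τ : EReal) ∈ Icc lo hi := by
  constructor
  · by_contra! hq
    exact (le_cdf_quant hV hτ).not_gt (by rw [hlo _ hq]; exact hτ.1)
  · by_contra! hq
    obtain ⟨y, hhy, hyq⟩ := EReal.lt_iff_exists_real_btwn.1 hq
    have hqy : quant P V τ ≤ y := (quant_le_iff hV hτ).2 (by rw [hhi y hhy.le]; exact hτ.2.le)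
    exact (EReal.coe_lt_coe_iff.1 hyq).not_ge hqy

end QuantileOfRandomVariable

section QuantileLevels

variable {p c : ℝ}

lemma qLo_eq_one_sub_qUp (p c τ : ℝ) : qLo p c τ = 1 - qUp p c (1 - τ) := by
  unfold qLo qUp
  rw [_root_.sub_sub_cancel, min_comm (1 - τ) τ, ← max_sub_sub_left, ← max_sub_sub_left, sub_self]
  ring_nf

lemma qUp_pos (hp : 0 < p) (hc : 0 ≤ c) {τ : ℝ} (hτ : τ ∈ Ioo 0 1) : 0 < qUp p c τ := by
  have hmin : 0 ≤ min τ (1 - τ) := le_min hτ.1.le (sub_nonneg.2 hτ.2.le)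
  have hτ0 : 0 < τ := hτ.1
  exact lt_min (lt_min (by positivity) (by positivity)) one_pos

lemma qLo_lt_one (hp : 0 < p) (hc : 0 ≤ c) {τ : ℝ} (hτ : τ ∈ Ioo 0 1) : qLo p c τ < 1 := by
  rw [qLo_eq_one_sub_qUp]
  exact sub_lt_self 1 (qUp_pos hp hc ⟨sub_pos.2 hτ.2, sub_lt_self 1 hτ.1⟩)

lemma add_mul_min_lt_add_mul_min {k s τ : ℝ} (hk : 0 ≤ k) (hsτ : s < τ) (hτ : τ ≤ 1)
    (h1 : τ + k * min τ (1 - τ) < 1) : s + k * min s (1 - s) < τ + k * min τ (1 - τ) := by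
  obtain hle | hle := le_total τ (1 - τ)
  · rw [min_eq_left hle]
    have hmin : k * min s (1 - s) ≤ k * τ :=
      mul_le_mul_of_nonneg_left ((min_le_left _ _).trans hsτ.le) hk
    linarith
  · rw [min_eq_right hle] at h1 ⊢
    have hk1 : k < 1 := by
      by_contra! hk1
      linarith [mul_le_mul_of_nonneg_right hk1 (sub_nonneg.2 hτ)]
    have hmin : k * min s (1 - s) ≤ k * (1 - s) := mul_le_mul_of_nonneg_left (min_le_right _ _) hk
    linarith [mul_pos (sub_pos.2 hk1) (sub_pos.2 hsτ)]

lemma qUp_lt_qUp (hp : 0 < p) (hc : 0 ≤ c) {s τ : ℝ} (hsτ : s < τ) (hτ : τ ≤ 1)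
    (h1 : qUp p c τ < 1) : qUp p c s < qUp p c τ := by
  have hdiv : qUp p c s < τ / p :=
    ((min_le_left _ _).trans (min_le_right _ _)).trans_lt (div_lt_div_of_pos_right hsτ hp)
  obtain hlt | hge := lt_or_ge (τ + c / p * min τ (1 - τ)) 1
  · have hlin : qUp p c s < τ + c / p * min τ (1 - τ) :=
      ((min_le_left _ _).trans (min_le_left _ _)).trans_lt
        (add_mul_min_lt_add_mul_min (div_nonneg hc hp.le) hsτ hτ hlt)
    exact lt_min (lt_min hlin hdiv) (hlin.trans hlt)
  · have hτp : τ / p < 1 := by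
      by_contra! hτp
      exact h1.not_ge (le_min (le_min hge hτp) le_rfl)
    exact lt_min (lt_min ((hdiv.trans hτp).trans_le hge) hdiv) (hdiv.trans hτp)

lemma monotoneOn_qUp (hp : 0 < p) (hc : 0 ≤ c) : MonotoneOn (qUp p c) (Iic 1) := by
  intro s _ τ hτ hsτ
  obtain rfl | hlt := hsτ.eq_or_lt
  · exact le_rfl
  obtain h1 | h1 := lt_or_ge (qUp p c τ) 1
  · exact (qUp_lt_qUp hp hc hlt hτ h1).le
  · exact (min_le_right _ _).trans h1

lemma monotoneOn_qLo (hp : 0 < p) (hc : 0 ≤ c) : MonotoneOn (qLo p c) (Ici 0) := by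
  intro s hs τ hτ hsτ
  rw [qLo_eq_one_sub_qUp, qLo_eq_one_sub_qUp]
  exact sub_le_sub_left (monotoneOn_qUp hp hc (sub_le_self (1 : ℝ) (mem_Ici.1 hτ))
    (sub_le_self (1 : ℝ) (mem_Ici.1 hs))
    (sub_le_sub_left hsτ 1)) 1

lemma div_le_qUp (hp : 0 < p) {a t : ℝ} (hdep : a - p * t ≤ c * min t (1 - t)) (hat : a ≤ t)
    (hap : a ≤ p) : a / p ≤ qUp p c t := by
  refine le_min (le_min ?_ (div_le_div_of_nonneg_right hat hp.le)) ((div_le_one hp).2 hap)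
  calc a / p ≤ (p * t + c * min t (1 - t)) / p :=
        div_le_div_of_nonneg_right (sub_le_iff_le_add'.1 hdep) hp.le
    _ = t + c / p * min t (1 - t) := by field_simp

lemma qLo_le_div (hp : 0 < p) {a t : ℝ} (hdep : p * t - a ≤ c * min t (1 - t))
    (hat : p - a ≤ 1 - t) (ha : 0 ≤ a) : qLo p c t ≤ a / p := by
  have hcompl : (p - a) / p ≤ qUp p c (1 - t) := by
    refine div_le_qUp hp ?_ hat (sub_le_self p ha)
    rw [_root_.sub_sub_cancel, min_comm]
    linarith
  rw [qLo_eq_one_sub_qUp]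
  rw [sub_div, div_self hp.ne'] at hcompl
  linarith

end QuantileLevels

section BinaryTreatment

variable {Ω : Type*} [MeasurableSpace Ω] {P : Measure Ω} [IsFiniteMeasure P] {X : Ω → ℕ}
  {V : Ω → ℝ}

lemma measureReal_inter_eq_zero_add_inter_eq_one (hX : Measurable X) (hX01 : ∀ ω, X ω ≤ 1)
    (s : Set Ω) :
    P.real (s ∩ {ω | X ω = 0}) + P.real (s ∩ {ω | X ω = 1}) = P.real s := by
  have hsdiff : s \ {ω | X ω = 0} = s ∩ {ω | X ω = 1} := by
    ext ω
    have := hX01 ω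
    simp only [mem_sdiff, mem_inter_iff, mem_ofPred_eq]
    grind
  rw [← hsdiff]
  exact measureReal_inter_add_sdiff (hX (measurableSet_singleton 0))

lemma px_mul_condCDF' (x : ℕ) (y : ℝ) :
    px P X x * condCDF' P X V x y = P.real ({ω | V ω ≤ y} ∩ {ω | X ω = x}) :=
  mul_div_cancel_of_imp' fun hpx =>
    le_antisymm ((measureReal_mono inter_subset_right).trans_eq hpx) measureReal_nonneg

lemma condCDF'_eq_cdf_cond (hV : Measurable V) (hX : Measurable X) {x : ℕ}
    (hpx : 0 < px P X x) :
    condCDF' P X V x = cdf ((P[|{ω | X ω = x}]).map V) := by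
  have := cond_isProbabilityMeasure (μ := P) (s := {ω | X ω = x})
    fun h => hpx.ne' (by rw [px, h, ENNReal.toReal_zero])
  have hXx : MeasurableSet {ω | X ω = x} := hX (measurableSet_singleton x)
  ext y
  rw [cdf_map_eq_measureReal hV, measureReal_def, cond_apply hXx,
    ENNReal.toReal_mul, ENNReal.toReal_inv, inv_mul_eq_div, inter_comm]
  rfl

end BinaryTreatment

section CDependence

variable {Ω : Type*} [MeasurableSpace Ω] {P : Measure Ω} [IsProbabilityMeasure P] {X : Ω → ℕ}
  {V : Ω → ℝ} {c : ℝ} {x : ℕ}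

lemma px_zero_add_px_one (hX : Measurable X) (hX01 : ∀ ω, X ω ≤ 1) :
    px P X 0 + px P X 1 = 1 := by
  simpa [px, measureReal_def] using measureReal_inter_eq_zero_add_inter_eq_one (P := P) hX hX01 univ

lemma px_pos (hX : Measurable X) (hX01 : ∀ ω, X ω ≤ 1) (hp1 : px P X 1 ∈ Ioo 0 1)
    (hx : x ≤ 1) : 0 < px P X x := by
  interval_cases x
  · linarith [px_zero_add_px_one (P := P) hX hX01, hp1.2]
  · exact hp1.1

lemma cdf_map_eq_condCDF'_zero_add_one (hV : Measurable V) (hX : Measurable X)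
    (hX01 : ∀ ω, X ω ≤ 1) (y : ℝ) :
    cdf (P.map V) y = px P X 0 * condCDF' P X V 0 y + px P X 1 * condCDF' P X V 1 y := by
  rw [px_mul_condCDF', px_mul_condCDF', cdf_map_eq_measureReal hV,
    measureReal_inter_eq_zero_add_inter_eq_one hX hX01]

lemma quant_mem_Icc_of_condCDF' {lo hi : EReal} (hV : Measurable V) (hX : Measurable X)
    (hX01 : ∀ ω, X ω ≤ 1)
    (hsupp : ∀ x ≤ 1, ∀ y : ℝ, ((y : EReal) < lo → condCDF' P X V x y = 0) ∧
      (hi ≤ y → condCDF' P X V x y = 1)) {τ : ℝ} (hτ : τ ∈ Ioo 0 1) :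
    (quant P V τ : EReal) ∈ Icc lo hi := by
  have hmix := cdf_map_eq_condCDF'_zero_add_one (P := P) hV hX hX01
  refine quant_mem_Icc hV (fun y hy => ?_) (fun y hy => ?_) hτ
  · rw [hmix, (hsupp 0 zero_le_one y).1 hy, (hsupp 1 le_rfl y).1 hy, mul_zero, mul_zero, add_zero]
  · rw [hmix, (hsupp 0 zero_le_one y).2 hy, (hsupp 1 le_rfl y).2 hy, mul_one, mul_one,
      px_zero_add_px_one hX hX01]

lemma CDep.abs_measureReal_inter_eq_one_sub_le (hV : Measurable V) (hd : CDep P X V c)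
    {B : Set ℝ} (hB : MeasurableSet B) :
    |P.real (V ⁻¹' B ∩ {ω | X ω = 1}) - px P X 1 * P.real (V ⁻¹' B)| ≤
      c * P.real (V ⁻¹' B) := by
  obtain ⟨g, hg, hg01, hgB, hgc⟩ := hd
  have := Measure.isProbabilityMeasure_map (μ := P) hV.aemeasurable
  have hgi : Integrable g (P.map V) :=
    .of_mem_Icc 0 1 hg.aemeasurable (.of_forall hg01)
  have hsub : P.real (V ⁻¹' B ∩ {ω | X ω = 1}) - px P X 1 * P.real (V ⁻¹' B) =
      ∫ v in B, (g v - px P X 1) ∂(P.map V) := by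
    rw [integral_sub hgi.integrableOn (integrable_const _), ← hgB B hB, setIntegral_const,
      smul_eq_mul, mul_comm, map_measureReal_apply hV hB, inter_comm]
    rfl
  rw [hsub, ← map_measureReal_apply hV hB]
  exact norm_setIntegral_le_of_norm_le_const_ae (f := fun v => g v - px P X 1)
    (measure_lt_top _ _) (ae_restrict_of_ae hgc)

lemma CDep.nonneg (hV : Measurable V) (hd : CDep P X V c) : 0 ≤ c := by
  simpa using (abs_nonneg _).trans (hd.abs_measureReal_inter_eq_one_sub_le hV .univ)

lemma CDep.abs_measureReal_inter_sub_le (hV : Measurable V) (hX : Measurable X)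
    (hX01 : ∀ ω, X ω ≤ 1) (hd : CDep P X V c) (hx : x ≤ 1) {B : Set ℝ} (hB : MeasurableSet B) :
    |P.real (V ⁻¹' B ∩ {ω | X ω = x}) - px P X x * P.real (V ⁻¹' B)| ≤
      c * P.real (V ⁻¹' B) := by
  have h1 := hd.abs_measureReal_inter_eq_one_sub_le hV hB
  interval_cases x
  · have hinter := measureReal_inter_eq_zero_add_inter_eq_one (P := P) hX hX01 (V ⁻¹' B)
    have hpx := px_zero_add_px_one (P := P) hX hX01
    rw [← hinter] at h1 ⊢
    rw [eq_sub_of_add_eq hpx, ← abs_neg]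
    convert h1 using 2
    ring
  · exact h1

lemma CDep.abs_measureReal_inter_sub_le_min (hV : Measurable V) (hX : Measurable X)
    (hX01 : ∀ ω, X ω ≤ 1) (hd : CDep P X V c) (hx : x ≤ 1) {B : Set ℝ} (hB : MeasurableSet B) :
    |P.real (V ⁻¹' B ∩ {ω | X ω = x}) - px P X x * P.real (V ⁻¹' B)| ≤
      c * min (P.real (V ⁻¹' B)) (1 - P.real (V ⁻¹' B)) := by
  rw [mul_min_of_nonneg _ _ (hd.nonneg hV)]
  refine le_min (hd.abs_measureReal_inter_sub_le hV hX hX01 hx hB) ?_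
  have hcompl := hd.abs_measureReal_inter_sub_le hV hX hX01 hx hB.compl
  have hsplit : P.real (V ⁻¹' B ∩ {ω | X ω = x}) + P.real (V ⁻¹' Bᶜ ∩ {ω | X ω = x}) =
      px P X x := by
    rw [inter_comm, inter_comm _ {ω | X ω = x}, preimage_compl, ← sdiff_eq]
    exact measureReal_inter_add_sdiff (hV hB)
  rw [preimage_compl, probReal_compl_eq_one_sub (hV hB), ← preimage_compl] at hcompl
  calc |P.real (V ⁻¹' B ∩ {ω | X ω = x}) - px P X x * P.real (V ⁻¹' B)|
      = |P.real (V ⁻¹' Bᶜ ∩ {ω | X ω = x}) - px P X x * (1 - P.real (V ⁻¹' B))| := by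
        rw [← abs_neg]
        congr 1
        linear_combination -hsplit
    _ ≤ c * (1 - P.real (V ⁻¹' B)) := hcompl

lemma CDep.condCDF'_mem_Icc (hV : Measurable V) (hX : Measurable X) (hX01 : ∀ ω, X ω ≤ 1)
    (hd : CDep P X V c) (hx : x ≤ 1) (hpx : 0 < px P X x) (y : ℝ) :
    condCDF' P X V x y ∈
      Icc (qLo (px P X x) c (cdf (P.map V) y)) (qUp (px P X x) c (cdf (P.map V) y)) := by
  have hdep : |P.real ({ω | V ω ≤ y} ∩ {ω | X ω = x}) - px P X x * P.real {ω | V ω ≤ y}| ≤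
      c * min (P.real {ω | V ω ≤ y}) (1 - P.real {ω | V ω ≤ y}) :=
    hd.abs_measureReal_inter_sub_le_min hV hX hX01 hx measurableSet_Iic
  have hunion : px P X x - P.real ({ω | V ω ≤ y} ∩ {ω | X ω = x}) ≤
      1 - P.real {ω | V ω ≤ y} := by
    have hadd : _ = _ + px P X x := measureReal_union_add_inter (μ := P) (s := {ω | V ω ≤ y})
      (hX (measurableSet_singleton x))
    have hle : P.real ({ω | V ω ≤ y} ∪ {ω | X ω = x}) ≤ 1 := measureReal_le_one
    linarith
  obtain ⟨hlower, hupper⟩ := abs_sub_le_iff.1 hdep |>.symm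
  rw [cdf_map_eq_measureReal hV]
  constructor
  · exact qLo_le_div hpx hlower hunion measureReal_nonneg
  · exact div_le_qUp hpx hupper (measureReal_mono inter_subset_left)
      (measureReal_mono inter_subset_right)

lemma CDep.quant_mem_Icc_Qgen {lo hi : EReal} (hV : Measurable V) (hX : Measurable X)
    (hX01 : ∀ ω, X ω ≤ 1) (hd : CDep P X V c) (hx : x ≤ 1) (hpx : 0 < px P X x)
    {τ : ℝ} (hτ : τ ∈ Ioo 0 1) (hq : (quant P V τ : EReal) ∈ Icc lo hi) :
    (quant P V τ : EReal) ∈ Icc (Qgen (condCDF' P X V x) lo hi (qLo (px P X x) c τ))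
      (Qgen (condCDF' P X V x) lo hi (qUp (px P X x) c τ)) := by
  have hc : 0 ≤ c := hd.nonneg hV
  have hG := hd.condCDF'_mem_Icc hV hX hX01 hx hpx
  rw [condCDF'_eq_cdf_cond hV hX hpx] at hG ⊢
  constructor
  · refine Qgen_cdf_le (qLo_lt_one hpx hc hτ) hq.1 (le_trans ?_ (hG _).1)
    exact monotoneOn_qLo hpx hc hτ.1.le (cdf_nonneg _ _) (le_cdf_quant hV hτ)
  · refine le_Qgen_cdf (qUp_pos hpx hc hτ) hq.2 fun hlt y hy => (quant_le_iff hV hτ).2 ?_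
    by_contra! hyτ
    exact (hy.trans (hG y).2).not_gt (qUp_lt_qUp hpx hc hyτ hτ.2.le hlt)

end CDependence

section PotentialOutcomes

variable {Ω : Type*} [MeasurableSpace Ω] {P : Measure Ω} {Yv : ℕ → Ω → ℝ} {X : Ω → ℕ}
  {Y : Ω → ℝ}

lemma condCDF'_observed (hY : ∀ ω, Y ω = Yv (X ω) ω) (x : ℕ) :
    condCDF' P X Y x = condCDF' P X (Yv x) x := by
  have hset (y : ℝ) :
      {ω | Y ω ≤ y} ∩ {ω | X ω = x} = {ω | Yv x ω ≤ y} ∩ {ω | X ω = x} := by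
    ext ω
    refine and_congr_left fun hω => ?_
    rw [mem_ofPred_eq, mem_ofPred_eq, hY, show X ω = x from hω]
  funext y
  rw [condCDF', hset, condCDF']

end PotentialOutcomes

theorem ate_bounds_general {Ω : Type*} [MeasurableSpace Ω]
    (P : Measure Ω) [IsProbabilityMeasure P]
    (Yv : ℕ → Ω → ℝ) (X : Ω → ℕ) (Y : Ω → ℝ)
    (hYm : ∀ x ≤ 1, Measurable (Yv x)) (hXm : Measurable X)
    (hX01 : ∀ ω, X ω ≤ 1)
    (hY : ∀ ω, Y ω = Yv (X ω) ω)
    (hp1 : px P X 1 ∈ Ioo 0 1)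
    (lo hi : ℕ → EReal)
    (hsupp : ∀ x ≤ 1, ∀ x' ≤ 1, ∀ y : ℝ,
      ((y : EReal) < lo x → condCDF' P X (Yv x) x' y = 0) ∧
      (hi x ≤ (y : EReal) → condCDF' P X (Yv x) x' y = 1))
    (c : ℝ) (hdep : ∀ x ≤ 1, CDep P X (Yv x) c)
    (hint : ∀ x ≤ 1, Integrable (Yv x) P) :
    (∀ x ≤ 1,
      eint01 (fun τ => Qgen (condCDF' P X Y x) (lo x) (hi x) (qLo (px P X x) c τ)) ≤
        ((∫ ω, Yv x ω ∂P : ℝ) : EReal) ∧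
      ((∫ ω, Yv x ω ∂P : ℝ) : EReal) ≤
        eint01 (fun τ => Qgen (condCDF' P X Y x) (lo x) (hi x) (qUp (px P X x) c τ))) ∧
    (eint01 (fun τ => Qgen (condCDF' P X Y 1) (lo 1) (hi 1) (qLo (px P X 1) c τ) -
          Qgen (condCDF' P X Y 0) (lo 0) (hi 0) (qUp (px P X 0) c τ)) ≤
        ((∫ ω, (Yv 1 ω - Yv 0 ω) ∂P : ℝ) : EReal) ∧
      ((∫ ω, (Yv 1 ω - Yv 0 ω) ∂P : ℝ) : EReal) ≤
        eint01 (fun τ => Qgen (condCDF' P X Y 1) (lo 1) (hi 1) (qUp (px P X 1) c τ) -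
          Qgen (condCDF' P X Y 0) (lo 0) (hi 0) (qLo (px P X 0) c τ))) := by
  have hquant : ∀ x ≤ 1, ∀ τ ∈ Ioo 0 1, (quant P (Yv x) τ : EReal) ∈
      Icc (Qgen (condCDF' P X Y x) (lo x) (hi x) (qLo (px P X x) c τ))
        (Qgen (condCDF' P X Y x) (lo x) (hi x) (qUp (px P X x) c τ)) := by
    intro x hx τ hτ
    rw [condCDF'_observed hY]
    exact (hdep x hx).quant_mem_Icc_Qgen (hYm x hx) hXm hX01 hx (px_pos hXm hX01 hp1 hx) hτ
      (quant_mem_Icc_of_condCDF' (hYm x hx) hXm hX01 (hsupp x hx) hτ)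
  have hlaw : ∀ x ≤ 1, IdentDistrib (quant P (Yv x)) (Yv x) (volume.restrict (Ioo 0 1)) P :=
    fun x hx => identDistrib_quant (hYm x hx)
  have hquant_int : ∀ x ≤ 1, IntegrableOn (quant P (Yv x)) (Ioo 0 1) :=
    fun x hx => (hlaw x hx).integrable_iff.2 (hint x hx)
  refine ⟨fun x hx => ?_, ?_⟩
  · rw [← (hlaw x hx).integral_eq]
    exact integral_mem_Icc_eint01 (hquant_int x hx) (hquant x hx)
  · rw [integral_sub (hint 1 le_rfl) (hint 0 zero_le_one), ← (hlaw 1 le_rfl).integral_eq,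
      ← (hlaw 0 zero_le_one).integral_eq,
      ← integral_sub (hquant_int 1 le_rfl) (hquant_int 0 zero_le_one)]
    refine integral_mem_Icc_eint01 ((hquant_int 1 le_rfl).sub (hquant_int 0 zero_le_one))
      fun τ hτ => ?_
    have h1 := hquant 1 le_rfl τ hτ
    have h0 := hquant 0 zero_le_one τ hτ
    rw [EReal.coe_sub]
    exact ⟨EReal.sub_le_sub h1.1 h0.2, EReal.sub_le_sub h1.2 h0.1⟩

/-- Bounds on mean potential outcomes and on the ATE under `c`-dependence:
`E(Y_x) ∈ [∫_0^1 Q̲ᶜ_x(τ) dτ, ∫_0^1 Q̄ᶜ_x(τ) dτ]` and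
`E(Y_1 - Y_0) ∈ [∫_0^1 (Q̲ᶜ_1(τ) - Q̄ᶜ_0(τ)) dτ, ∫_0^1 (Q̄ᶜ_1(τ) - Q̲ᶜ_0(τ)) dτ]`,
where the integrals may take the values `±∞`. -/
theorem ate_bounds {Ω : Type*} [MeasurableSpace Ω]
    (P : Measure Ω) [IsProbabilityMeasure P]
    (Yv : ℕ → Ω → ℝ) (X : Ω → ℕ) (Y : Ω → ℝ)
    (hYm : ∀ x, Measurable (Yv x)) (hXm : Measurable X)
    (hX01 : ∀ ω, X ω ≤ 1)
    (hY : ∀ ω, Y ω = Yv (X ω) ω)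
    (hp1 : px P X 1 ∈ Set.Ioo (0:ℝ) 1)
    (lo hi : ℕ → EReal) (hlh : ∀ x ≤ 1, lo x < hi x)
    (hcont : ∀ x ≤ 1, ∀ x' ≤ 1, Continuous (condCDF' P X (Yv x) x'))
    (hmono : ∀ x ≤ 1, ∀ x' ≤ 1, StrictMonoOn (condCDF' P X (Yv x) x')
      {y : ℝ | lo x ≤ (y : EReal) ∧ (y : EReal) ≤ hi x})
    (hsupp : ∀ x ≤ 1, ∀ x' ≤ 1, ∀ y : ℝ,
      ((y : EReal) ≤ lo x → condCDF' P X (Yv x) x' y = 0) ∧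
      (hi x ≤ (y : EReal) → condCDF' P X (Yv x) x' y = 1))
    (c : ℝ) (hc : c ∈ Set.Icc (0:ℝ) 1)
    (hdep1 : CDep P X (Yv 1) c) (hdep0 : CDep P X (Yv 0) c)
    (hint : ∀ x ≤ 1, Integrable (Yv x) P)
    (hcondint : ∀ x ≤ 1, IntegrableOn Y {ω | X ω = x} P) :
    (∀ x ≤ 1,
      eint01 (fun τ => Qgen (condCDF' P X Y x) (lo x) (hi x) (qLo (px P X x) c τ)) ≤
        ((∫ ω, Yv x ω ∂P : ℝ) : EReal) ∧
      ((∫ ω, Yv x ω ∂P : ℝ) : EReal) ≤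
        eint01 (fun τ => Qgen (condCDF' P X Y x) (lo x) (hi x) (qUp (px P X x) c τ))) ∧
    (eint01 (fun τ => Qgen (condCDF' P X Y 1) (lo 1) (hi 1) (qLo (px P X 1) c τ) -
          Qgen (condCDF' P X Y 0) (lo 0) (hi 0) (qUp (px P X 0) c τ)) ≤
        ((∫ ω, (Yv 1 ω - Yv 0 ω) ∂P : ℝ) : EReal) ∧
      ((∫ ω, (Yv 1 ω - Yv 0 ω) ∂P : ℝ) : EReal) ≤
        eint01 (fun τ => Qgen (condCDF' P X Y 1) (lo 1) (hi 1) (qUp (px P X 1) c τ) -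
          Qgen (condCDF' P X Y 0) (lo 0) (hi 0) (qLo (px P X 0) c τ))) := by
  exact ate_bounds_general P Yv X Y (fun x _ => hYm x) hXm hX01 hY hp1 lo hi
    (fun x hx x' hx' y => ⟨fun h => (hsupp x hx x' hx' y).1 h.le, (hsupp x hx x' hx' y).2⟩) c
    (fun x hx => by interval_cases x <;> assumption) hint
end
end

section
/- Let Y_1, Y_0, X be {0,1}-valued random variables with observed outcome Y = X·Y_1 + (1−X)·Y_0, p_x = P(X = x), p_1 ∈ (0,1), and P(Y_x = 1 | X = x') ∈ (0,1) for all x, x' ∈ {0,1}. Fix x ∈ {0,1} and c ∈ [0,1], and suppose |P(X = 1 | Y_x = v) − p_1| ≤ c for v ∈ {0,1}. Then, writing p_{1|x} = P(Y = 1 | X = x), p_{1|x}·p_x / min{p_x + c, 1} ≤ P(Y_x = 1) ≤ min{ (p_{1|x}·p_x/(p_x − c))·1(p_x > c) + 1(p_x ≤ c), p_{1|x}·p_x + (1 − p_x) }. -/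
open MeasureTheory Set

noncomputable section

/-!
By consistency `P(Y = 1, X = x) = P(Y_x = 1, X = x)`. Writing `A = {Y_x = 1}` and `B = {X = x}`,
the dependence condition says `P(B) - c ≤ P(A ∩ B) / P(A) ≤ P(B) + c`, and exchanging `P(A)` with
the outer terms turns this into bounds on `P(A)`. For binary `X`, the condition at `X = 1` is
equivalent to the one at `X = 0`, since passing to complements only changes the sign of
`P(B ∣ A) - P(B)`.
-/

section Events

variable {Ω : Type*} [MeasurableSpace Ω] {P : Measure Ω} {A B : Set Ω}

lemma measureReal_pos_of_inter_div_pos [IsFiniteMeasure P]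
    (h : 0 < P.real (A ∩ B) / P.real B) : 0 < P.real A ∧ 0 < P.real B := by
  have hB : 0 < P.real B := measureReal_nonneg.lt_of_ne' (div_ne_zero_iff.1 h.ne').2
  have hAB : 0 < P.real (A ∩ B) := (div_pos_iff_of_pos_right hB).1 h
  exact ⟨hAB.trans_le (measureReal_mono inter_subset_left), hB⟩

lemma measureReal_le_inter_add_one_sub [IsProbabilityMeasure P] (hB : MeasurableSet B) :
    P.real A ≤ P.real (A ∩ B) + (1 - P.real B) :=
  calc P.real A = P.real (A ∩ B) + P.real (A \ B) := (measureReal_inter_add_sdiff hB).symm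
    _ ≤ P.real (A ∩ B) + P.real Bᶜ :=
        add_le_add_right (measureReal_mono (sdiff_subset_compl A B)) _
    _ = P.real (A ∩ B) + (1 - P.real B) := by rw [probReal_compl_eq_one_sub hB]

lemma inter_div_min_le_measureReal [IsFiniteMeasure P] {u : ℝ} (hA : 0 < P.real A)
    (hu_pos : 0 < u) (hu : P.real (B ∩ A) / P.real A ≤ u) :
    P.real (A ∩ B) / min u 1 ≤ P.real A := by
  rw [div_le_comm₀ (lt_min hu_pos one_pos) hA, inter_comm]
  exact le_min hu (div_le_one_of_le₀ (measureReal_mono inter_subset_right) measureReal_nonneg)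

lemma measureReal_le_inter_div {l : ℝ} (hA : 0 < P.real A) (hl_pos : 0 < l)
    (hl : l ≤ P.real (B ∩ A) / P.real A) : P.real A ≤ P.real (A ∩ B) / l := by
  rwa [← le_div_comm₀ hl_pos hA, inter_comm]

lemma abs_inter_div_sub_compl [IsProbabilityMeasure P] (hA : P.real A ≠ 0)
    (hB : MeasurableSet B) :
    |P.real (Bᶜ ∩ A) / P.real A - P.real Bᶜ| = |P.real (B ∩ A) / P.real A - P.real B| := by
  have hsplit : P.real (Bᶜ ∩ A) = P.real A - P.real (B ∩ A) := by
    rw [inter_comm Bᶜ, inter_comm B, ← sdiff_eq, eq_sub_iff_add_eq',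
      measureReal_inter_add_sdiff hB]
  rw [hsplit, sub_div, div_self hA, probReal_compl_eq_one_sub hB, sub_sub_sub_cancel_left,
    abs_sub_comm]

lemma abs_inter_div_sub_eq_of_le_one [IsProbabilityMeasure P] (hA : P.real A ≠ 0) {X : Ω → ℕ}
    (hX : MeasurableSet {ω | X ω = 1}) (hX01 : ∀ ω, X ω ≤ 1) {x : ℕ} (hx : x ≤ 1) :
    |P.real ({ω | X ω = x} ∩ A) / P.real A - P.real {ω | X ω = x}| =
      |P.real ({ω | X ω = 1} ∩ A) / P.real A - P.real {ω | X ω = 1}| := by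
  rcases Nat.le_one_iff_eq_zero_or_eq_one.1 hx with rfl | rfl
  · have hcompl : {ω | X ω = 0} = {ω | X ω = 1}ᶜ := by
      ext ω
      have := hX01 ω
      simp only [mem_compl_iff, mem_ofPred_eq]
      omega
    rw [hcompl, abs_inter_div_sub_compl hA hX]
  · rfl

end Events

theorem binary_outcome_bounds_general {Ω ι κ : Type*} [MeasurableSpace Ω]
    (P : Measure Ω) [IsProbabilityMeasure P] (Yv : ι → Ω → κ) (X : Ω → ι) (Y : Ω → κ)
    (hY : ∀ ω, Y ω = Yv (X ω) ω) (x : ι) (y : κ) (c : ℝ)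
    (hXm : MeasurableSet {ω | X ω = x})
    (hYx : 0 < P.real {ω | Yv x ω = y}) (hXx : 0 < P.real {ω | X ω = x})
    (hdep : |P.real ({ω | X ω = x} ∩ {ω | Yv x ω = y}) / P.real {ω | Yv x ω = y} -
      P.real {ω | X ω = x}| ≤ c) :
    P.real ({ω | Y ω = y} ∩ {ω | X ω = x}) / P.real {ω | X ω = x} * P.real {ω | X ω = x} /
        min (P.real {ω | X ω = x} + c) 1 ≤ P.real {ω | Yv x ω = y} ∧
    P.real {ω | Yv x ω = y} ≤
      min
        (if c < P.real {ω | X ω = x} then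
          P.real ({ω | Y ω = y} ∩ {ω | X ω = x}) / P.real {ω | X ω = x} * P.real {ω | X ω = x} /
            (P.real {ω | X ω = x} - c)
        else 1)
        (P.real ({ω | Y ω = y} ∩ {ω | X ω = x}) / P.real {ω | X ω = x} * P.real {ω | X ω = x} +
          (1 - P.real {ω | X ω = x})) := by
  have hconsistency :
      {ω | Y ω = y} ∩ {ω | X ω = x} = {ω | Yv x ω = y} ∩ {ω | X ω = x} := by
    ext ω
    exact and_congr_left fun hω : X ω = x => by rw [mem_ofPred_eq, mem_ofPred_eq, hY, hω]
  rw [hconsistency, div_mul_cancel₀ _ hXx.ne']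
  have hc : 0 ≤ c := (abs_nonneg _).trans hdep
  obtain ⟨hupper, hlower⟩ := abs_sub_le_iff.1 hdep
  refine ⟨inter_div_min_le_measureReal hYx (by positivity) (sub_le_iff_le_add'.1 hupper),
    le_min ?_ (measureReal_le_inter_add_one_sub hXm)⟩
  split_ifs with hcx
  · exact measureReal_le_inter_div hYx (sub_pos.2 hcx) (sub_le_comm.1 hlower)
  · exact measureReal_le_one

/-- Bounds on `P(Y_x = 1)` for binary potential outcomes under the discrete
`c`-dependence condition `|P(X=1 ∣ Y_x = v) - p₁| ≤ c` for `v ∈ {0,1}`: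
`p_{1|x} p_x / min{p_x + c, 1} ≤ P(Y_x = 1)
  ≤ min{ (p_{1|x} p_x/(p_x - c))1(p_x > c) + 1(p_x ≤ c), p_{1|x} p_x + (1 - p_x) }`. -/
theorem binary_outcome_bounds {Ω : Type*} [MeasurableSpace Ω]
    (P : Measure Ω) [IsProbabilityMeasure P]
    (Yv : ℕ → Ω → ℕ) (X : Ω → ℕ) (Y : Ω → ℕ)
    (hYm : ∀ x, Measurable (Yv x)) (hXm : Measurable X)
    (hY01 : ∀ x ω, Yv x ω ≤ 1) (hX01 : ∀ ω, X ω ≤ 1)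
    (hY : ∀ ω, Y ω = Yv (X ω) ω)
    (hp1 : (P {ω | X ω = 1}).toReal ∈ Set.Ioo (0:ℝ) 1)
    (hsupp : ∀ x ≤ 1, ∀ x' ≤ 1,
      (P ({ω | Yv x ω = 1} ∩ {ω | X ω = x'})).toReal / (P {ω | X ω = x'}).toReal ∈
        Set.Ioo (0:ℝ) 1)
    (x : ℕ) (hx : x ≤ 1) (c : ℝ) (hc : c ∈ Set.Icc (0:ℝ) 1)
    (hdep : ∀ v ≤ 1,
      |(P ({ω | X ω = 1} ∩ {ω | Yv x ω = v})).toReal / (P {ω | Yv x ω = v}).toReal -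
        (P {ω | X ω = 1}).toReal| ≤ c) :
    (P ({ω | Y ω = 1} ∩ {ω | X ω = x})).toReal / (P {ω | X ω = x}).toReal *
        (P {ω | X ω = x}).toReal / min ((P {ω | X ω = x}).toReal + c) 1 ≤
      (P {ω | Yv x ω = 1}).toReal ∧
    (P {ω | Yv x ω = 1}).toReal ≤
      min
        (if c < (P {ω | X ω = x}).toReal then
          (P ({ω | Y ω = 1} ∩ {ω | X ω = x})).toReal / (P {ω | X ω = x}).toReal *
            (P {ω | X ω = x}).toReal / ((P {ω | X ω = x}).toReal - c)
        else 1)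
        ((P ({ω | Y ω = 1} ∩ {ω | X ω = x})).toReal / (P {ω | X ω = x}).toReal *
            (P {ω | X ω = x}).toReal + (1 - (P {ω | X ω = x}).toReal)) := by
  obtain ⟨hYx, hXx⟩ := measureReal_pos_of_inter_div_pos (hsupp x hx x hx).1
  exact binary_outcome_bounds_general P Yv X Y hY x 1 c (hXm (measurableSet_singleton x)) hYx hXx
    ((abs_inter_div_sub_eq_of_le_one hYx.ne' (hXm (measurableSet_singleton 1)) hX01 hx).trans_le
      (hdep 1 le_rfl))
end
end
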